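/- Consider the compartmental system (S) on the box 𝒳 = [0,c₁] × ⋯ × [0,cₙ] satisfying assumptions (A1)–(A7), with flow φ(t,ξ) denoting the unique solution with φ(0,ξ) = ξ ∈ 𝒳. Let 1 < l ≤ n, a ∈ (0,∞)^l and b ≥ 0, and consider the set ℱ(a,b,l) of compartmental matrices. Suppose there exist a box S ⊆ 𝒳 (a product of n intervals) and a time τ ≥ 0 such that φ(t,ξ) ∈ S for all t ≥ τ and all ξ ∈ 𝒳, and F(t,x) ∈ ℱ(a,b,l) for all t ≥ τ and all x ∈ S. Then (S) is incrementally exponentially stable with respect to 𝒳: there exist λ > 0 and γ ≥ 1 such that |φ(t,ξ¹) − φ(t,ξ²)|₁ ≤ γ e^{−λ t} |ξ¹ − ξ²|₁ for all ξ¹, ξ² ∈ 𝒳 and all t ≥ 0. -/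

import Mathlib

open Finset

/-- An `n × n` real matrix is compartmental if it is Metzler (nonnegative
off-diagonal entries) and all of its column sums are nonpositive. -/
def IsCompartmental {n : ℕ} (F : Matrix (Fin n) (Fin n) ℝ) : Prop :=
  (∀ i j : Fin n, i ≠ j → 0 ≤ F i j) ∧ ∀ i : Fin n, (∑ k, F k i) ≤ 0

/-- The set `ℱ(a,b,l)` of compartmental matrices (`0`-based indices). -/
def MemCalF {n l : ℕ} (hl : 1 < l) (hln : l ≤ n) (a : Fin l → ℝ) (b : ℝ)
    (F : Matrix (Fin n) (Fin n) ℝ) : Prop :=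
  IsCompartmental F ∧
  (∀ i j : Fin n, i < j → F i j ≤ b) ∧
  (∀ i : Fin n, (hi : (i : ℕ) + 1 < l) →
    a ⟨i, Nat.lt_of_succ_lt hi⟩ ≤ ∑ k ∈ univ.filter (fun k : Fin n => i < k), F k i) ∧
  (∀ i : Fin n, l - 1 ≤ (i : ℕ) → (∑ k, F k i) ≤ -(a ⟨l - 1, by omega⟩))

/-- Regularity assumption (A1) for a scalar coefficient function
`h : [0,∞) × [0, ci] → ℝ`: continuity, nonnegativity and Lipschitz continuity
in the second argument uniformly in the first. -/
def A1fun (ci : ℝ) (h : ℝ → ℝ → ℝ) : Prop :=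
  ContinuousOn (fun p : ℝ × ℝ => h p.1 p.2) (Set.Ici 0 ×ˢ Set.Icc 0 ci) ∧
  (∀ t ∈ Set.Ici (0 : ℝ), ∀ s ∈ Set.Icc 0 ci, 0 ≤ h t s) ∧
  ∃ L : ℝ, ∀ t ∈ Set.Ici (0 : ℝ), ∀ s₁ ∈ Set.Icc 0 ci, ∀ s₂ ∈ Set.Icc 0 ci,
    |h t s₁ - h t s₂| ≤ L * |s₁ - s₂|

/-- The box `𝒳 = [0,c₁] × ⋯ × [0,cₙ]`. -/
def boxIcc {n : ℕ} (c : Fin n → ℝ) : Set (Fin n → ℝ) :=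
  {x | ∀ i, x i ∈ Set.Icc 0 (c i)}

/-- Right-hand side of the compartmental system (S). -/
def Qrhs {n : ℕ} (f0 : Fin n → ℝ → ℝ → ℝ) (fc : Fin n → Fin n → ℝ → ℝ → ℝ)
    (g Ienv : Fin n → ℝ → ℝ → ℝ) (t : ℝ) (x : Fin n → ℝ) : Fin n → ℝ := fun i =>
  (∑ j ∈ univ.erase i, fc i j t (x i) * g j t (x j)) + Ienv i t (x i)
    - (f0 i t (x i) + ∑ j ∈ univ.erase i, fc j i t (x j)) * g i t (x i)

/-- The compartmental matrix `F(t,x)` of system (S). -/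
def Fmat {n : ℕ} (f0 : Fin n → ℝ → ℝ → ℝ) (fc : Fin n → Fin n → ℝ → ℝ → ℝ)
    (t : ℝ) (x : Fin n → ℝ) : Matrix (Fin n) (Fin n) ℝ :=
  Matrix.of fun i j =>
    if i = j then -(f0 i t (x i)) - ∑ k ∈ univ.erase i, fc k i t (x k)
    else fc i j t (x i)

/-- The `1`-norm `|x|₁ = ∑ i, |x i|` on `ℝⁿ`. -/
def onenorm {n : ℕ} (x : Fin n → ℝ) : ℝ := ∑ i, |x i|

lemma abs_right_deriv (d : ℝ → ℝ) (d' t : ℝ) (h : HasDerivAt d d' t) :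
    ∃ s : ℝ, |s| ≤ 1 ∧ s * d t = |d t| ∧
      HasDerivWithinAt (fun z => |d z|) (s * d') (Set.Ici t) t := by
  rcases lt_trichotomy (d t) 0 with h0 | h0 | h0
  · refine ⟨-1, by simp, by rw [abs_of_neg h0]; ring, ?_⟩
    have hh : HasDerivAt (fun z => -d z) (-1 * d') t := by
      have := h.neg
      rwa [neg_one_mul]
    refine (hh.congr_of_eventuallyEq ?_).hasDerivWithinAt
    filter_upwards [h.continuousAt.eventually (gt_mem_nhds h0)] with z hz
    exact abs_of_neg hz
  · obtain ⟨s, hs1, hs2⟩ : ∃ s : ℝ, |s| ≤ 1 ∧ s * d' = |d'| := by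
      rcases le_total 0 d' with hd | hd
      · exact ⟨1, by simp, by rw [abs_of_nonneg hd]; ring⟩
      · exact ⟨-1, by simp, by rw [abs_of_nonpos hd]; ring⟩
    refine ⟨s, hs1, by simp [h0], ?_⟩
    rw [hs2, ← hasDerivWithinAt_Ioi_iff_Ici, hasDerivWithinAt_iff_tendsto_slope' (by simp)]
    have h1 := (hasDerivWithinAt_iff_tendsto_slope' (s := Set.Ioi t) (by simp)).1
      (h.hasDerivWithinAt (s := Set.Ioi t))
    refine h1.abs.congr' ?_
    filter_upwards [self_mem_nhdsWithin] with z hz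
    have hz' : 0 < z - t := sub_pos.2 hz
    simp [slope_def_field, h0, abs_div, abs_of_pos hz']
  · refine ⟨1, by simp, by rw [abs_of_pos h0]; ring, ?_⟩
    have hh : HasDerivAt (fun z => d z) (1 * d') t := by rwa [one_mul]
    refine (hh.congr_of_eventuallyEq ?_).hasDerivWithinAt
    filter_upwards [h.continuousAt.eventually (lt_mem_nhds h0)] with z hz
    exact abs_of_pos hz

lemma pair_ineq (wi wj si sj P P' g g' K d : ℝ) (hwi : 0 ≤ wi) (hwj : 0 ≤ wj)
    (hsi : |si| ≤ 1) (hsj : |sj| ≤ 1) (hP : 0 ≤ P) (hg' : 0 ≤ g')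
    (hg : sj * (g - g') = |g - g'|) (hdP : si * (P - P') = -|P - P'|)
    (hK : |P - P'| * g' ≤ K * d) :
    (wi * si - wj * sj) * (P * g - P' * g') ≤
      (wi - wj) * P * |g - g'| + max (wj - wi) 0 * (K * d) := by
  have e : (wi * si - wj * sj) * (P * g - P' * g') =
      wi * P * (si * (g - g')) - wj * P * (sj * (g - g')) + wi * g' * (si * (P - P'))
        + wj * g' * (-sj * (P - P')) := by ring
  have h1 : si * (g - g') ≤ |g - g'| := by
    calc si * (g - g') ≤ |si * (g - g')| := le_abs_self _
      _ = |si| * |g - g'| := abs_mul _ _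
      _ ≤ 1 * |g - g'| := by gcongr
      _ = _ := one_mul _
  have h2 : -sj * (P - P') ≤ |P - P'| := by
    calc -sj * (P - P') ≤ |-sj * (P - P')| := le_abs_self _
      _ = |sj| * |P - P'| := by rw [abs_mul, abs_neg]
      _ ≤ 1 * |P - P'| := by gcongr
      _ = _ := one_mul _
  rw [e, hg, hdP]
  have h3 : wi * P * (si * (g - g')) ≤ wi * P * |g - g'| := by gcongr
  have h4 : wj * g' * (-sj * (P - P')) ≤ wj * g' * |P - P'| := by gcongr
  have hnn : 0 ≤ |P - P'| * g' := by positivity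
  have h5 : (wj - wi) * (|P - P'| * g') ≤ max (wj - wi) 0 * (K * d) := by
    calc (wj - wi) * (|P - P'| * g') ≤ max (wj - wi) 0 * (|P - P'| * g') := by
          gcongr; exact le_max_left _ _
      _ ≤ _ := by gcongr
  nlinarith

lemma sum_ineq {n : ℕ} (w s f0 f0' I I' g g' d : Fin n → ℝ) (P P' : Fin n → Fin n → ℝ) (K : ℝ)
    (hw : ∀ i, 0 ≤ w i) (hs : ∀ i, |s i| ≤ 1) (hP : ∀ i j, 0 ≤ P i j) (hg' : ∀ i, 0 ≤ g' i)
    (hg : ∀ i, s i * (g i - g' i) = |g i - g' i|)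
    (hdP : ∀ i j, s i * (P i j - P' i j) = -|P i j - P' i j|)
    (hK : ∀ i j, |P i j - P' i j| * g' j ≤ K * d i)
    (hI : ∀ i, s i * (I i - I' i) ≤ 0) (h0 : ∀ i, 0 ≤ s i * (f0 i - f0' i)) :
    ∑ i, w i * (s i * (((∑ j, P i j * g j) + I i - (f0 i + ∑ j, P j i) * g i) -
      ((∑ j, P' i j * g' j) + I' i - (f0' i + ∑ j, P' j i) * g' i))) ≤
    ∑ j, ((∑ i, w i * P i j) - w j * (f0 j + ∑ i, P i j)) * |g j - g' j| +
      ∑ i, (∑ j, max (w j - w i) 0) * (K * d i) := by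
  have e1 : ∑ i, w i * (s i * (((∑ j, P i j * g j) + I i - (f0 i + ∑ j, P j i) * g i) -
      ((∑ j, P' i j * g' j) + I' i - (f0' i + ∑ j, P' j i) * g' i))) =
      (∑ i, ∑ j, (w i * s i - w j * s j) * (P i j * g j - P' i j * g' j)) +
      ∑ i, (w i * (s i * (I i - I' i)) - w i * (f0 i * (s i * (g i - g' i)))
        - w i * g' i * (s i * (f0 i - f0' i))) := by
    have : ∑ i, ∑ j, (w i * s i - w j * s j) * (P i j * g j - P' i j * g' j) =
        (∑ i, ∑ j, w i * s i * (P i j * g j - P' i j * g' j)) -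
        ∑ i, ∑ j, w i * s i * (P j i * g i - P' j i * g' i) := by
      rw [Finset.sum_comm (f := fun i j => w i * s i * (P j i * g i - P' j i * g' i)),
        ← Finset.sum_sub_distrib]
      refine Finset.sum_congr rfl fun i _ => ?_
      rw [← Finset.sum_sub_distrib]
      refine Finset.sum_congr rfl fun j _ => ?_
      ring
    rw [this, ← Finset.sum_sub_distrib, ← Finset.sum_add_distrib]
    refine Finset.sum_congr rfl fun i _ => ?_
    rw [← Finset.mul_sum, ← Finset.mul_sum, Finset.sum_sub_distrib, Finset.sum_sub_distrib,
      ← Finset.sum_mul, ← Finset.sum_mul]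
    ring
  have e2 : ∑ j, ((∑ i, w i * P i j) - w j * (f0 j + ∑ i, P i j)) * |g j - g' j| +
      ∑ i, (∑ j, max (w j - w i) 0) * (K * d i) =
      (∑ i, ∑ j, ((w i - w j) * P i j * |g j - g' j| + max (w j - w i) 0 * (K * d i))) +
      ∑ i, (- (w i * (f0 i * |g i - g' i|))) := by
    simp_rw [Finset.sum_add_distrib]
    rw [Finset.sum_comm (f := fun i j => (w i - w j) * P i j * |g j - g' j|)]
    have : ∀ j, ∑ i, (w i - w j) * P i j * |g j - g' j| =
        ((∑ i, w i * P i j) - w j * ∑ i, P i j) * |g j - g' j| := by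
      intro j
      rw [← Finset.sum_mul, Finset.mul_sum, ← Finset.sum_sub_distrib]
      congr 1
      exact Finset.sum_congr rfl fun i _ => by ring
    simp_rw [this, ← Finset.sum_mul]
    rw [add_right_comm]
    simp_rw [← Finset.sum_add_distrib]
    exact Finset.sum_congr rfl fun i _ => by ring
  rw [e1, e2]
  refine add_le_add ?_ ?_
  · exact Finset.sum_le_sum fun i _ => Finset.sum_le_sum fun j _ =>
      pair_ineq _ _ _ _ _ _ _ _ _ _ (hw i) (hw j) (hs i) (hs j) (hP i j) (hg' j) (hg j)
        (hdP i j) (hK i j)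
  · refine Finset.sum_le_sum fun i _ => ?_
    rw [hg i]
    have h1 := mul_nonneg (hw i) (neg_nonneg.2 (hI i))
    have h2 := mul_nonneg (mul_nonneg (hw i) (hg' i)) (h0 i)
    nlinarith

/-- existence of good weights -/
lemma weights (n l : ℕ) (hl : 1 < l) (hln : l ≤ n) (a0 B : ℝ) (ha : 0 < a0) (hB : 0 ≤ B) :
    ∃ (w δ : Fin n → ℝ) (W lam : ℝ), 0 < lam ∧ (∀ i, 1 ≤ w i) ∧ (∀ i, w i ≤ W) ∧
      (∀ i, 0 ≤ δ i) ∧ (∀ i j, i < j → w j ≤ w i) ∧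
      (∀ i j : Fin n, (i : ℕ) + 1 < l → i < j → w j ≤ w i - δ i) ∧
      (∀ j : Fin n, (j : ℕ) + 1 < l → B * (∑ k, max (w k - w j) 0) - δ j * a0 ≤ -lam * w j) ∧
      (∀ j : Fin n, l - 1 ≤ (j : ℕ) → B * (∑ k, max (w k - w j) 0) - a0 * w j ≤ -lam * w j) := by
  set N : ℝ := B * n + 1 with hN
  have hNp : 0 < N := by positivity
  set M : ℝ := 1 + N / a0 with hM
  have hM1 : 1 ≤ M := by
    have : 0 < N / a0 := by positivity
    linarith
  have hMa : (M - 1) * a0 = N := by rw [hM]; field_simp; ring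
  have hM0 : 0 < M := by linarith
  set ε : ℝ := a0 / (2 * N * M ^ (l - 1)) with hε
  have hεp : 0 < ε := by positivity
  have hεe : N * (ε * M ^ (l - 1)) = a0 / 2 := by rw [hε]; field_simp
  have hmono : ∀ p q : ℕ, p ≤ q → M ^ p ≤ M ^ q := fun p q h => pow_le_pow_right₀ hM1 h
  set w : Fin n → ℝ := fun k => 1 + ε * (M ^ (l - 1) - M ^ (min (k : ℕ) (l - 1))) with hw
  set W : ℝ := 1 + ε * M ^ (l - 1) with hW
  have hWp : 0 < W := by positivity
  have hw1 : ∀ i, 1 ≤ w i := fun i => by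
    have := mul_nonneg hεp.le (sub_nonneg.2 (hmono (min (i : ℕ) (l - 1)) (l - 1) (min_le_right _ _)))
    simp only [hw]; linarith
  have hwW : ∀ i, w i ≤ W := fun i => by
    have : 0 < ε * M ^ (min (i : ℕ) (l - 1)) := by positivity
    simp only [hw, hW]; linarith
  have hT : ∀ j : Fin n, ∑ k, max (w k - w j) 0 ≤ n * (ε * M ^ (min (j : ℕ) (l - 1))) := by
    intro j
    calc ∑ k, max (w k - w j) 0 ≤ ∑ k : Fin n, ε * M ^ (min (j : ℕ) (l - 1)) := by
          refine Finset.sum_le_sum fun k _ => max_le ?_ (by positivity)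
          have : 0 < ε * M ^ (min (k : ℕ) (l - 1)) := by positivity
          simp only [hw]; linarith
      _ = _ := by simp
  have hlam : 0 < min ε (a0 / 2) := lt_min hεp (by positivity)
  refine ⟨w, fun i => ε * (M ^ (i : ℕ) * (M - 1)), W, min ε (a0 / 2) / W, by positivity, hw1, hwW,
    fun i => ?_, fun i j hij => ?_, fun i j hi hij => ?_, fun j hj => ?_, fun j hj => ?_⟩
  · have : 0 ≤ M - 1 := by linarith
    positivity
  · have hij' : (i : ℕ) < j := hij
    have := hmono (min (i : ℕ) (l - 1)) (min (j : ℕ) (l - 1)) (by omega)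
    have := mul_le_mul_of_nonneg_left this hεp.le
    simp only [hw]; linarith
  · have hij' : (i : ℕ) < j := hij
    have h1 := hmono (i + 1) (min (j : ℕ) (l - 1)) (by omega)
    have h2 : min (i : ℕ) (l - 1) = i := by omega
    have := mul_le_mul_of_nonneg_left h1 hεp.le
    simp only [hw, h2]
    rw [pow_succ] at this
    linarith
  · have h2 : min (j : ℕ) (l - 1) = j := by omega
    have h1 := mul_le_mul_of_nonneg_left (hT j) hB
    rw [h2] at h1
    have h3 : ε * (M ^ (j : ℕ) * (M - 1)) * a0 = ε * M ^ (j : ℕ) * N := by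
      rw [← hMa]; ring
    have h4 : min ε (a0 / 2) / W * w j ≤ ε := by
      calc min ε (a0 / 2) / W * w j ≤ min ε (a0 / 2) / W * W := by gcongr; exact hwW j
        _ = min ε (a0 / 2) := by field_simp
        _ ≤ ε := min_le_left _ _
    have h5 : ε ≤ ε * M ^ (j : ℕ) := le_mul_of_one_le_right hεp.le (one_le_pow₀ hM1)
    show B * _ - ε * (M ^ (j : ℕ) * (M - 1)) * a0 ≤ _
    rw [h3, hN]
    nlinarith
  · have h2 : min (j : ℕ) (l - 1) = l - 1 := by omega
    have h1 := mul_le_mul_of_nonneg_left (hT j) hB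
    rw [h2] at h1
    have h4 : min ε (a0 / 2) / W * w j ≤ a0 / 2 := by
      calc min ε (a0 / 2) / W * w j ≤ min ε (a0 / 2) / W * W := by gcongr; exact hwW j
        _ = min ε (a0 / 2) := by field_simp
        _ ≤ _ := min_le_right _ _
    have h5 : 0 < ε * M ^ (l - 1) := by positivity
    have h6 : a0 ≤ a0 * w j := le_mul_of_one_le_right ha.le (hw1 j)
    rw [hN] at hεe
    nlinarith

/-- weighted column sums -/
lemma colsum {n : ℕ} (F : Fin n → Fin n → ℝ) (w : Fin n → ℝ) (b : ℝ) (j : Fin n) (D : ℝ)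
    (hw : ∀ i j, i < j → w j ≤ w i) (hb : 0 ≤ b)
    (hF : ∀ i, i ≠ j → 0 ≤ F i j) (hFb : ∀ i, i < j → F i j ≤ b)
    (hD : ∀ i, j < i → w i ≤ w j - D) :
    ∑ k, w k * F k j ≤ w j * (∑ k, F k j) + b * (∑ k, max (w k - w j) 0)
      - D * ∑ k ∈ univ.filter (fun k : Fin n => j < k), F k j := by
  rw [Finset.sum_filter, Finset.mul_sum, Finset.mul_sum, Finset.mul_sum, ← Finset.sum_add_distrib,
    ← Finset.sum_sub_distrib]
  refine Finset.sum_le_sum fun k _ => ?_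
  rcases lt_trichotomy k j with h | h | h
  · rw [if_neg h.not_gt, max_eq_left (by linarith [hw k j h])]
    have := mul_le_mul_of_nonneg_left (hFb k h) (sub_nonneg.2 (hw k j h))
    linarith
  · subst h; simp
  · rw [if_pos h]
    have h1 := mul_nonneg (hF k h.ne') (sub_nonneg.2 (hD k h))
    have h2 : 0 ≤ b * max (w k - w j) 0 := mul_nonneg hb (le_max_right _ _)
    linarith

lemma unif_pos (l : ℕ) (a : Fin l → ℝ) (ha : ∀ i, 0 < a i) : ∃ a0 > 0, ∀ i, a0 ≤ a i := by
  rcases Nat.eq_zero_or_pos l with h | h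
  · subst h; exact ⟨1, one_pos, fun i => i.elim0⟩
  · have : Nonempty (Fin l) := ⟨⟨0, h⟩⟩
    obtain ⟨i, hi⟩ := Finite.exists_min a
    exact ⟨a i, ha i, hi⟩

lemma unif_bd {ι : Type*} [Fintype ι] (L : ι → ℝ) : ∃ C : ℝ, 0 ≤ C ∧ ∀ i, L i ≤ C :=
  ⟨∑ i, |L i|, Finset.sum_nonneg fun _ _ => abs_nonneg _, fun i => (le_abs_self _).trans
    (Finset.single_le_sum (f := fun i => |L i|) (fun _ _ => abs_nonneg _) (Finset.mem_univ i))⟩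

/-- Decay of the weighted norm. -/
lemma decay {n : ℕ} (d d' : ℝ → Fin n → ℝ) (w : Fin n → ℝ) (lam t0 : ℝ)
    (hd : ∀ t ≥ t0, HasDerivAt d (d' t) t)
    (hineq : ∀ t ≥ t0, ∀ s : Fin n → ℝ, (∀ i, |s i| ≤ 1) → (∀ i, s i * d t i = |d t i|) →
      ∑ i, w i * (s i * d' t i) ≤ -lam * ∑ i, w i * |d t i|) :
    ∀ t ≥ t0, ∑ i, w i * |d t i| ≤ (∑ i, w i * |d t0 i|) * Real.exp (-lam * (t - t0)) := by
  intro t ht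
  have hdi : ∀ z ≥ t0, ∀ i, HasDerivAt (fun u => d u i) (d' z i) z := fun z hz i =>
    hasDerivAt_pi.1 (hd z hz) i
  have hex : ∀ z, ∃ f' : ℝ, z ≥ t0 → (f' ≤ -lam * ∑ i, w i * |d z i| ∧
      HasDerivWithinAt (fun u => ∑ i, w i * |d u i|) f' (Set.Ici z) z) := by
    intro z
    by_cases hz : z ≥ t0
    · choose s hs1 hs2 hs3 using fun i => abs_right_deriv (fun u => d u i) (d' z i) z (hdi z hz i)
      refine ⟨∑ i, w i * (s i * d' z i), fun _ => ⟨hineq z hz s hs1 hs2, ?_⟩⟩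
      exact HasDerivWithinAt.fun_sum fun i _ => (hs3 i).const_mul (w i)
    · exact ⟨0, fun h => absurd h hz⟩
  choose f' hf' using hex
  have := le_gronwallBound_of_liminf_deriv_right_le (f := fun u => ∑ i, w i * |d u i|) (f' := f')
    (δ := ∑ i, w i * |d t0 i|) (K := -lam) (ε := 0) (a := t0) (b := t) ?_ ?_ le_rfl ?_ t
    ⟨ht, le_rfl⟩
  · rwa [gronwallBound_ε0] at this
  · intro z hz
    refine ContinuousAt.continuousWithinAt ?_
    have : ∀ i, ContinuousAt (fun u => d u i) z := fun i => (hdi z hz.1 i).continuousAt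
    fun_prop
  · intro z hz r hr
    exact ((hf' z hz.1).2.liminf_right_slope_le hr).mono fun u hu => by
      simpa [slope_def_module] using hu
  · intro z hz
    have := (hf' z hz.1).1
    simpa using this

/-- under (A1)–(A7), if there are a box `S ⊆ 𝒳` and a time
`τ ≥ 0` such that every solution enters `S` after time `τ` and
`F(t,x) ∈ ℱ(a,b,l)` for `t ≥ τ`, `x ∈ S`, then the system (S) is incrementally
exponentially stable with respect to `𝒳`. -/
theorem stmt15 (n l : ℕ) (hn : 0 < n) (hl : 1 < l) (hln : l ≤ n)
    (a : Fin l → ℝ) (ha : ∀ i, 0 < a i) (b : ℝ) (hb : 0 ≤ b)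
    (c : Fin n → ℝ) (hc : ∀ i, 0 < c i)
    (f0 : Fin n → ℝ → ℝ → ℝ) (fc : Fin n → Fin n → ℝ → ℝ → ℝ)
    (g Ienv : Fin n → ℝ → ℝ → ℝ)
    (hA1 : (∀ i, A1fun (c i) (f0 i)) ∧ (∀ i, A1fun (c i) (g i)) ∧
      (∀ i, A1fun (c i) (Ienv i)) ∧ ∀ i j, j ≠ i → A1fun (c i) (fc i j))
    (hA2 : ∀ t ≥ (0 : ℝ), ∀ i, Ienv i t 0 = 0 ∧ Ienv i t (c i) = 0 ∧
      g i t 0 = 0 ∧ ∀ j, j ≠ i → fc i j t (c i) = 0)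
    (hA3 : ∀ t ≥ (0 : ℝ), ∀ i, ∀ xi yi : ℝ, 0 ≤ xi → xi ≤ yi → yi ≤ c i →
      yi - xi ≤ g i t yi - g i t xi)
    (hA4 : ∀ t ≥ (0 : ℝ), ∀ i j, j ≠ i → AntitoneOn (fc i j t) (Set.Icc 0 (c i)))
    (hA5 : ∀ t ≥ (0 : ℝ), ∀ i, MonotoneOn (f0 i t) (Set.Icc 0 (c i)))
    (hA6 : ∀ t ≥ (0 : ℝ), ∀ i, AntitoneOn (Ienv i t) (Set.Icc 0 (c i)))
    -- (A7): existence and uniqueness of solutions in `𝒳` from any initial data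
    (hA7 : ∀ τ ≥ (0 : ℝ), ∀ ξ ∈ boxIcc c, ∃ q : ℝ → Fin n → ℝ,
      (q τ = ξ ∧ ∀ t ≥ τ, q t ∈ boxIcc c ∧
        HasDerivAt q (Qrhs f0 fc g Ienv t (q t)) t) ∧
      ∀ q' : ℝ → Fin n → ℝ,
        (q' τ = ξ ∧ ∀ t ≥ τ, q' t ∈ boxIcc c ∧
          HasDerivAt q' (Qrhs f0 fc g Ienv t (q' t)) t) →
        ∀ t ≥ τ, q' t = q t)
    -- the flow from time `0`
    (φ : ℝ → (Fin n → ℝ) → (Fin n → ℝ))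
    (hφ : ∀ ξ ∈ boxIcc c, φ 0 ξ = ξ ∧ ∀ t ≥ (0 : ℝ), φ t ξ ∈ boxIcc c ∧
      HasDerivAt (fun s => φ s ξ) (Qrhs f0 fc g Ienv t (φ t ξ)) t)
    -- the box `S ⊆ 𝒳` and the time `τ`
    (Si : Fin n → Set ℝ) (hSi : ∀ i, (Si i).OrdConnected)
    (S : Set (Fin n → ℝ)) (hS : S = {x : Fin n → ℝ | ∀ i, x i ∈ Si i})
    (hSsub : S ⊆ boxIcc c)
    (τ : ℝ) (hτ : 0 ≤ τ)
    (hreach : ∀ t ≥ τ, ∀ ξ ∈ boxIcc c, φ t ξ ∈ S)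
    (hFF : ∀ t ≥ τ, ∀ x ∈ S, MemCalF hl hln a b (Fmat f0 fc t x)) :
    ∃ lam : ℝ, 0 < lam ∧ ∃ γ : ℝ, 1 ≤ γ ∧
      ∀ ξ₁ ∈ boxIcc c, ∀ ξ₂ ∈ boxIcc c, ∀ t ≥ (0 : ℝ),
        onenorm (φ t ξ₁ - φ t ξ₂) ≤ γ * Real.exp (-lam * t) * onenorm (ξ₁ - ξ₂) := by
  obtain ⟨hA1f0, hA1g, hA1I, hA1f⟩ := hA1
  obtain ⟨a0, ha0, ha0l⟩ := unif_pos l a ha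
  -- Lipschitz constants
  obtain ⟨Lg, hLg0, hLg⟩ : ∃ L : ℝ, 0 ≤ L ∧ ∀ i, ∀ t ≥ (0 : ℝ), ∀ u ∈ Set.Icc 0 (c i),
      ∀ v ∈ Set.Icc 0 (c i), |g i t u - g i t v| ≤ L * |u - v| := by
    choose L hL using fun i => (hA1g i).2.2
    obtain ⟨C, hC0, hC⟩ := unif_bd L
    refine ⟨C, hC0, fun i t ht u hu v hv => (hL i t ht u hu v hv).trans ?_⟩
    have := hC i
    gcongr
  obtain ⟨Lf, hLf0, hLf⟩ : ∃ L : ℝ, 0 ≤ L ∧ ∀ i j, j ≠ i → ∀ t ≥ (0 : ℝ), ∀ u ∈ Set.Icc 0 (c i),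
      ∀ v ∈ Set.Icc 0 (c i), |fc i j t u - fc i j t v| ≤ L * |u - v| := by
    have : ∀ p : Fin n × Fin n, ∃ L : ℝ, p.2 ≠ p.1 → ∀ t ≥ (0 : ℝ), ∀ u ∈ Set.Icc 0 (c p.1),
      ∀ v ∈ Set.Icc 0 (c p.1), |fc p.1 p.2 t u - fc p.1 p.2 t v| ≤ L * |u - v| := by
      intro p
      by_cases hp : p.2 ≠ p.1
      · obtain ⟨L, hL⟩ := (hA1f p.1 p.2 hp).2.2
        exact ⟨L, fun _ => hL⟩
      · exact ⟨0, fun h => absurd h hp⟩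
    choose L hL using this
    obtain ⟨C, hC0, hC⟩ := unif_bd L
    refine ⟨C, hC0, fun i j hij t ht u hu v hv => (hL (i, j) hij t ht u hu v hv).trans ?_⟩
    have := hC (i, j)
    gcongr
  obtain ⟨cm, hcm0, hcm⟩ := unif_bd c
  set K : ℝ := Lf * (Lg * cm) with hK
  have hK0 : 0 ≤ K := by positivity
  have hgb : ∀ t ≥ (0 : ℝ), ∀ i, ∀ u ∈ Set.Icc 0 (c i), g i t u ≤ Lg * cm := by
    intro t ht i u hu
    have h1 := hLg i t ht u hu 0 ⟨le_rfl, (hc i).le⟩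
    rw [(hA2 t ht i).2.2.1, sub_zero, sub_zero, abs_of_nonneg hu.1] at h1
    calc g i t u ≤ |g i t u| := le_abs_self _
      _ ≤ Lg * u := h1
      _ ≤ Lg * cm := by
        have := hu.2.trans (hcm i)
        gcongr
  -- the key pointwise inequality
  have key : ∀ t ≥ (0 : ℝ), ∀ x ∈ boxIcc c, ∀ y ∈ boxIcc c, ∀ w s : Fin n → ℝ, (∀ i, 0 ≤ w i) →
      (∀ i, |s i| ≤ 1) → (∀ i, s i * (x i - y i) = |x i - y i|) →
      ∑ i, w i * (s i * (Qrhs f0 fc g Ienv t x - Qrhs f0 fc g Ienv t y) i) ≤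
      ∑ j, (∑ i, w i * Fmat f0 fc t x i j) * |g j t (x j) - g j t (y j)| +
        ∑ i, (∑ j, max (w j - w i) 0) * (K * |x i - y i|) := by
    intro t ht x hx y hy w s hw hs hsd
    -- sign cases
    have hcase : ∀ i, x i = y i ∨ (x i < y i ∧ s i = -1) ∨ (y i < x i ∧ s i = 1) := by
      intro i
      rcases lt_trichotomy (x i) (y i) with h | h | h
      · right; left
        refine ⟨h, ?_⟩
        have h1 := hsd i
        rw [abs_of_neg (by linarith)] at h1
        have h2 : x i - y i ≠ 0 := by linarith
        apply mul_right_cancel₀ h2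
        linarith
      · exact Or.inl h
      · right; right
        refine ⟨h, ?_⟩
        have h1 := hsd i
        rw [abs_of_pos (by linarith)] at h1
        have h2 : x i - y i ≠ 0 := by linarith
        apply mul_right_cancel₀ h2
        linarith
    have hmon : ∀ (h : ℝ → ℝ) i, MonotoneOn h (Set.Icc 0 (c i)) →
        s i * (h (x i) - h (y i)) = |h (x i) - h (y i)| := by
      intro h i hh
      rcases hcase i with e | ⟨e, e'⟩ | ⟨e, e'⟩
      · simp [e]
      · have := hh (hx i) (hy i) e.le
        rw [e', abs_of_nonpos (by linarith)]; ring
      · have := hh (hy i) (hx i) e.le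
        rw [e', abs_of_nonneg (by linarith)]; ring
    have hant : ∀ (h : ℝ → ℝ) i, AntitoneOn h (Set.Icc 0 (c i)) →
        s i * (h (x i) - h (y i)) = -|h (x i) - h (y i)| := by
      intro h i hh
      rcases hcase i with e | ⟨e, e'⟩ | ⟨e, e'⟩
      · simp [e]
      · have := hh (hx i) (hy i) e.le
        rw [e', abs_of_nonneg (by linarith)]; ring
      · have := hh (hy i) (hx i) e.le
        rw [e', abs_of_nonpos (by linarith)]; ring
    set P : (Fin n → ℝ) → Fin n → Fin n → ℝ := fun z i j => if i = j then 0 else fc i j t (z i)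
      with hP
    have hQ : ∀ z i, Qrhs f0 fc g Ienv t z i = (∑ j, P z i j * g j t (z j)) + Ienv i t (z i)
        - (f0 i t (z i) + ∑ j, P z j i) * g i t (z i) := by
      intro z i
      have e1 : ∑ j, P z i j * g j t (z j) = ∑ j ∈ univ.erase i, fc i j t (z i) * g j t (z j) := by
        rw [← Finset.add_sum_erase univ _ (Finset.mem_univ i)]
        simp only [hP, if_true, zero_mul, zero_add]
        refine Finset.sum_congr rfl fun j hj => ?_
        rw [if_neg (Finset.ne_of_mem_erase hj).symm]
      have e2 : ∑ j, P z j i = ∑ j ∈ univ.erase i, fc j i t (z j) := by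
        rw [← Finset.add_sum_erase univ _ (Finset.mem_univ i)]
        simp only [hP, if_true, zero_add]
        refine Finset.sum_congr rfl fun j hj => ?_
        rw [if_neg (Finset.ne_of_mem_erase hj)]
      rw [e1, e2]; rfl
    have hFm : ∀ j, ∑ i, w i * Fmat f0 fc t x i j =
        (∑ i, w i * P x i j) - w j * (f0 j t (x j) + ∑ i, P x i j) := by
      intro j
      have e2 : ∑ i, P x i j = ∑ i ∈ univ.erase j, fc i j t (x i) := by
        rw [← Finset.add_sum_erase univ _ (Finset.mem_univ j)]
        simp only [hP, if_true, zero_add]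
        refine Finset.sum_congr rfl fun i hi => ?_
        rw [if_neg (Finset.ne_of_mem_erase hi)]
      have e1 : ∀ i, w i * Fmat f0 fc t x i j = w i * P x i j +
          if i = j then -(w j * (f0 j t (x j) + ∑ i, P x i j)) else 0 := by
        intro i
        by_cases hij : i = j
        · subst hij
          rw [if_pos rfl, e2]
          simp only [Fmat, hP, Matrix.of_apply, if_true]
          ring
        · simp only [Fmat, hP, Matrix.of_apply, if_neg hij, add_zero]
      rw [Finset.sum_congr rfl fun i _ => e1 i, Finset.sum_add_distrib, Finset.sum_ite_eq']
      simp
      ring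
    simp only [hFm, Pi.sub_apply, hQ]
    refine sum_ineq w s (fun i => f0 i t (x i)) (fun i => f0 i t (y i)) (fun i => Ienv i t (x i))
      (fun i => Ienv i t (y i)) (fun i => g i t (x i)) (fun i => g i t (y i))
      (fun i => |x i - y i|) (P x) (P y) K hw hs ?_ ?_ ?_ ?_ ?_ ?_ ?_
    · intro i j
      by_cases hij : i = j
      · simp [hP, hij]
      · simp only [hP, if_neg hij]
        exact (hA1f i j (Ne.symm hij)).2.1 t ht _ (hx i)
    · exact fun i => (hA1g i).2.1 t ht _ (hy i)
    · refine fun i => hmon (g i t) i ?_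
      intro u hu v hv huv
      have := hA3 t ht i u v hu.1 huv hv.2
      linarith
    · intro i j
      by_cases hij : i = j
      · simp [hP, hij]
      · simp only [hP, if_neg hij]
        exact hant (fc i j t) i (hA4 t ht i j (Ne.symm hij))
    · intro i j
      by_cases hij : i = j
      · simp only [hP, if_pos hij, sub_zero, abs_zero, zero_mul]
        positivity
      · simp only [hP, if_neg hij]
        have h1 := hLf i j (Ne.symm hij) t ht _ (hx i) _ (hy i)
        have h2 := hgb t ht j _ (hy j)
        have h3 := (hA1g j).2.1 t ht _ (hy j)
        calc _ ≤ (Lf * |x i - y i|) * (Lg * cm) := by gcongr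
          _ = _ := by rw [hK]; ring
    · intro i
      rw [hant (Ienv i t) i (hA6 t ht i)]
      simp
    · intro i
      rw [hmon (f0 i t) i (hA5 t ht i)]
      simp
  -- column sums of Fmat are nonpositive everywhere
  have hcol : ∀ t ≥ (0 : ℝ), ∀ x ∈ boxIcc c, ∀ j, ∑ i, Fmat f0 fc t x i j ≤ 0 := by
    intro t ht x hx j
    rw [← Finset.add_sum_erase univ _ (Finset.mem_univ j)]
    have e : ∑ i ∈ univ.erase j, Fmat f0 fc t x i j = ∑ i ∈ univ.erase j, fc i j t (x i) := by
      refine Finset.sum_congr rfl fun i hi => ?_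
      simp [Fmat, Finset.ne_of_mem_erase hi]
    rw [e]
    have := (hA1f0 j).2.1 t ht _ (hx j)
    simp [Fmat]
    linarith
  obtain ⟨w, δ, W, lam, hlam, hw1, hwW, hδ, hwa, hwδ, hwl, hwg⟩ :=
    weights n l hl hln a0 (b * Lg + K) ha0 (by positivity)
  have hW1 : 1 ≤ W := (hw1 ⟨0, hn⟩).trans (hwW ⟨0, hn⟩)
  have hderiv : ∀ ξ₁ ∈ boxIcc c, ∀ ξ₂ ∈ boxIcc c, ∀ t ≥ (0 : ℝ),
      HasDerivAt (fun s => φ s ξ₁ - φ s ξ₂)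
        (Qrhs f0 fc g Ienv t (φ t ξ₁) - Qrhs f0 fc g Ienv t (φ t ξ₂)) t :=
    fun ξ₁ h₁ ξ₂ h₂ t ht => ((hφ ξ₁ h₁).2 t ht).2.sub ((hφ ξ₂ h₂).2 t ht).2
  -- nonexpansiveness
  have hnonexp : ∀ ξ₁ ∈ boxIcc c, ∀ ξ₂ ∈ boxIcc c, ∀ t ≥ (0 : ℝ),
      onenorm (φ t ξ₁ - φ t ξ₂) ≤ onenorm (ξ₁ - ξ₂) := by
    intro ξ₁ h₁ ξ₂ h₂ t ht
    have := decay (fun s => φ s ξ₁ - φ s ξ₂)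
      (fun t => Qrhs f0 fc g Ienv t (φ t ξ₁) - Qrhs f0 fc g Ienv t (φ t ξ₂)) (fun _ => 1) 0 0
      (hderiv ξ₁ h₁ ξ₂ h₂) ?_ t ht
    · simpa [onenorm, (hφ ξ₁ h₁).1, (hφ ξ₂ h₂).1] using this
    · intro z hz s hs1 hs2
      have hx := ((hφ ξ₁ h₁).2 z hz).1
      have hk := key z hz _ hx _ ((hφ ξ₂ h₂).2 z hz).1 (fun _ => 1) s
        (fun _ => zero_le_one) hs1 (fun i => by simpa using hs2 i)
      refine hk.trans ?_
      simp only [one_mul, sub_self, max_self, Finset.sum_const_zero, zero_mul, add_zero, neg_zero]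
      exact Finset.sum_nonpos fun j _ =>
        mul_nonpos_of_nonpos_of_nonneg (hcol z hz _ hx j) (abs_nonneg _)
  -- exponential decay after τ
  have hexp : ∀ ξ₁ ∈ boxIcc c, ∀ ξ₂ ∈ boxIcc c, ∀ t ≥ τ,
      ∑ i, w i * |(φ t ξ₁ - φ t ξ₂) i| ≤
        (∑ i, w i * |(φ τ ξ₁ - φ τ ξ₂) i|) * Real.exp (-lam * (t - τ)) := by
    intro ξ₁ h₁ ξ₂ h₂
    refine decay (fun s => φ s ξ₁ - φ s ξ₂)
      (fun t => Qrhs f0 fc g Ienv t (φ t ξ₁) - Qrhs f0 fc g Ienv t (φ t ξ₂)) w lam τ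
      (fun t ht => hderiv ξ₁ h₁ ξ₂ h₂ t (hτ.trans ht)) ?_
    intro z hz s hs1 hs2
    have hz0 : z ≥ 0 := hτ.trans hz
    have hx := ((hφ ξ₁ h₁).2 z hz0).1
    have hy := ((hφ ξ₂ h₂).2 z hz0).1
    obtain ⟨⟨hF1, hF2⟩, hF3, hF4, hF5⟩ := hFF z hz _ (hreach z hz ξ₁ h₁)
    refine (key z hz0 _ hx _ hy w s (fun i => zero_le_one.trans (hw1 i)) hs1
      (fun i => by simpa using hs2 i)).trans ?_
    rw [← Finset.sum_add_distrib, Finset.mul_sum]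
    refine Finset.sum_le_sum fun j _ => ?_
    rw [Pi.sub_apply]
    generalize hxx : φ z ξ₁ = x at *
    generalize hyy : φ z ξ₂ = y at *
    set T := ∑ k, max (w k - w j) 0 with hT
    have hT0 : 0 ≤ T := Finset.sum_nonneg fun _ _ => le_max_right _ _
    have hwj := hw1 j
    -- bounds on Δg
    have hgu := hLg j z hz0 _ (hx j) _ (hy j)
    have hgl : |x j - y j| ≤ |g j z (x j) - g j z (y j)| := by
      rcases le_total (x j) (y j) with h | h
      · have := hA3 z hz0 j _ _ (hx j).1 h (hy j).2
        rw [abs_of_nonpos (by linarith), abs_of_nonpos (by linarith)]; linarith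
      · have := hA3 z hz0 j _ _ (hy j).1 h (hx j).2
        rw [abs_of_nonneg (by linarith), abs_of_nonneg (by linarith)]; linarith
    have hd0 : 0 ≤ |x j - y j| := abs_nonneg _
    obtain ⟨D, hD0, hCD, hDl⟩ : ∃ D, 0 ≤ D ∧ ∑ i, w i * Fmat f0 fc z x i j ≤ b * T - D ∧
        (b * Lg + K) * T - D ≤ -lam * w j := by
      by_cases hj : (j : ℕ) + 1 < l
      · refine ⟨δ j * a0, mul_nonneg (hδ j) ha0.le, ?_, hwl j hj⟩
        have h1 := colsum (fun i j => Fmat f0 fc z x i j) w b j (δ j) hwa hb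
          (fun i hi => hF1 i j hi) (fun i hi => hF3 i j hi) (fun i hi => hwδ j i hj hi)
        have h2 := mul_le_mul_of_nonneg_left ((ha0l _).trans (hF4 j hj)) (hδ j)
        have h3 := mul_nonneg (zero_le_one.trans hwj) (neg_nonneg.2 (hF2 j))
        linarith
      · have hj' : l - 1 ≤ (j : ℕ) := by omega
        refine ⟨a0 * w j, by positivity, ?_, hwg j hj'⟩
        have h1 := colsum (fun i j => Fmat f0 fc z x i j) w b j 0 hwa hb
          (fun i hi => hF1 i j hi) (fun i hi => hF3 i j hi)
          (fun i hi => by simpa using hwa j i hi)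
        have h2 : ∑ k, Fmat f0 fc z x k j ≤ -a0 :=
          (hF5 j hj').trans (neg_le_neg (ha0l _))
        have h3 := mul_le_mul_of_nonneg_left h2 (zero_le_one.trans hwj)
        linarith
    generalize |g j z (x j) - g j z (y j)| = G at *
    generalize |x j - y j| = d at *
    have hG0 : 0 ≤ G := hd0.trans hgl
    calc _ ≤ (b * T - D) * G + T * (K * d) := by gcongr
      _ = b * T * G - D * G + T * (K * d) := by ring
      _ ≤ b * T * (Lg * d) - D * d + T * (K * d) := by gcongr
      _ = ((b * Lg + K) * T - D) * d := by ring
      _ ≤ (-lam * w j) * d := by gcongr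
      _ = _ := by ring
  refine ⟨lam, hlam, W * Real.exp (lam * τ), ?_, ?_⟩
  · have : 1 ≤ Real.exp (lam * τ) := Real.one_le_exp (by positivity)
    nlinarith
  intro ξ₁ h₁ ξ₂ h₂ t ht
  have hn0 : 0 ≤ onenorm (ξ₁ - ξ₂) := Finset.sum_nonneg fun _ _ => abs_nonneg _
  have hee : W * Real.exp (lam * τ) * Real.exp (-lam * t) = W * Real.exp (-lam * (t - τ)) := by
    rw [mul_assoc, ← Real.exp_add]
    congr 2
    ring
  rw [hee]
  rcases le_total t τ with htτ | htτ
  · have h1 : 1 ≤ Real.exp (-lam * (t - τ)) := Real.one_le_exp (by nlinarith)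
    have h2 : 1 ≤ W * Real.exp (-lam * (t - τ)) := by nlinarith
    exact (hnonexp ξ₁ h₁ ξ₂ h₂ t ht).trans (le_mul_of_one_le_left hn0 h2)
  · calc onenorm (φ t ξ₁ - φ t ξ₂) ≤ ∑ i, w i * |(φ t ξ₁ - φ t ξ₂) i| :=
          Finset.sum_le_sum fun i _ => le_mul_of_one_le_left (abs_nonneg _) (hw1 i)
      _ ≤ (∑ i, w i * |(φ τ ξ₁ - φ τ ξ₂) i|) * Real.exp (-lam * (t - τ)) :=
          hexp ξ₁ h₁ ξ₂ h₂ t htτ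
      _ ≤ (∑ i, W * |(φ τ ξ₁ - φ τ ξ₂) i|) * Real.exp (-lam * (t - τ)) := by
          gcongr with i; exact hwW i
      _ = W * Real.exp (-lam * (t - τ)) * onenorm (φ τ ξ₁ - φ τ ξ₂) := by
          rw [← Finset.mul_sum, onenorm]; ring
      _ ≤ _ := by
          gcongr
          exact hnonexp ξ₁ h₁ ξ₂ h₂ τ hτ
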